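/- Let r ∈ [0,1), p ∈ ℝ, and let K ⊆ ℝ^d be compact. Suppose φ(y,ξ,ζ,t) is a smooth real-valued function such that for every multi-index β there is C_β with sup_{y∈K} |∂_y^β φ(y,ξ,ζ,t)| ≤ C_β |ξ|^{r−1}|ζ| for all ξ, ζ, t under consideration. Suppose w(y,ξ,ζ,t) is smooth in y, vanishes for y ∉ K, and for every multi-index β satisfies |∂_y^β w(y,ξ,ζ,t)| ≤ C_β |ξ|^p whenever |ζ| ≤ |ξ|/2. Then, for parameters restricted to 1 ≤ |ζ| ≤ |ξ|/2, there exists a function w̃(y,ξ,ζ,t), smooth in y and vanishing for y ∉ K, satisfying the same type of bounds |∂_y^β w̃(y,ξ,ζ,t)| ≤ C'_β |ξ|^p (with constants depending only on the constants above, r, p and K), such that |ζ| ∫_{ℝ^d} w(y,ξ,ζ,t) e^{iφ(y,ξ,ζ,t)} e^{−i⟨y,ζ⟩} dy = ∫_{ℝ^d} w̃(y,ξ,ζ,t) e^{iφ(y,ξ,ζ,t)} e^{−i⟨y,ζ⟩} dy. -/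

import Mathlib

open MeasureTheory Filter Topology

noncomputable section

/-- Dot product on `ℝ^d`. -/
def dotp {d : ℕ} (x ξ : Fin d → ℝ) : ℝ := ∑ i, x i * ξ i

/-- Directional derivative of a function between normed spaces. -/
def dirDeriv {E F : Type*} [NormedAddCommGroup E] [NormedSpace ℝ E]
    [NormedAddCommGroup F] [NormedSpace ℝ F] (v : E) (f : E → F) : E → F :=
  fun x => fderiv ℝ f x v

/-- Iterated directional derivatives along a list of directions. -/
def dirDerivList {E F : Type*} [NormedAddCommGroup E] [NormedSpace ℝ E]
    [NormedAddCommGroup F] [NormedSpace ℝ F] : List E → (E → F) → E → F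
  | [], f => f
  | v :: l, f => dirDeriv v (dirDerivList l f)

/-- Multi-index partial derivative `∂^α` with respect to a family of directions. -/
def mpderivB {n : ℕ} {E F : Type*} [NormedAddCommGroup E] [NormedSpace ℝ E]
    [NormedAddCommGroup F] [NormedSpace ℝ F] (b : Fin n → E) (α : Fin n → ℕ)
    (f : E → F) : E → F :=
  dirDerivList ((List.finRange n).flatMap fun i => List.replicate (α i) (b i)) f

/-- Multi-index partial derivative `∂^α` on `ℝ^d`. -/
def mpderiv {d : ℕ} {F : Type*} [NormedAddCommGroup F] [NormedSpace ℝ F]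
    (α : Fin d → ℕ) (f : (Fin d → ℝ) → F) : (Fin d → ℝ) → F :=
  mpderivB (fun i => Pi.single i 1) α f

/-- Order `|α|` of a multi-index. -/
def mOrder {d : ℕ} (α : Fin d → ℕ) : ℕ := ∑ i, α i

/-- Factorial `α!` of a multi-index. -/
def mFactorial {d : ℕ} (α : Fin d → ℕ) : ℕ := ∏ i, (α i).factorial

/-- Power `ζ^α`. -/
def mpow {d : ℕ} (ζ : Fin d → ℝ) (α : Fin d → ℕ) : ℝ := ∏ i, ζ i ^ α i

/-- The finset of multi-indices of order `< N`. -/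
def mIdxLt (d N : ℕ) : Finset (Fin d → ℕ) :=
  (Fintype.piFinset fun _ : Fin d => Finset.range N).filter fun α => mOrder α < N

/-- The finset of multi-indices of order `= N`. -/
def mIdxEq (d N : ℕ) : Finset (Fin d → ℕ) :=
  (Fintype.piFinset fun _ : Fin d => Finset.range (N + 1)).filter fun α => mOrder α = N

/-- Hörmander symbol class `S^m_{ρ,δ}(X × ℝ^d)`. -/
def IsSymbol {d : ℕ} (X : Set (Fin d → ℝ)) (m ρ δ : ℝ)
    (a : (Fin d → ℝ) → (Fin d → ℝ) → ℂ) : Prop :=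
  ContDiffOn ℝ (⊤ : ℕ∞) (fun q : (Fin d → ℝ) × (Fin d → ℝ) => a q.1 q.2) (X ×ˢ Set.univ) ∧
  ∀ (α β : Fin d → ℕ) (K : Set (Fin d → ℝ)), IsCompact K → K ⊆ X →
    ∃ C : ℝ, ∀ x ∈ K, ∀ ξ : Fin d → ℝ,
      ‖mpderiv β (fun y => mpderiv α (fun η => a y η) ξ) x‖ ≤
        C * (1 + ‖ξ‖) ^ (m - ρ * (mOrder α : ℝ) + δ * (mOrder β : ℝ))

/-- Hörmander amplitude class `S^m_{ρ,δ,δ}(X × X × ℝ^d)`. -/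
def IsAmplitude {d : ℕ} (X : Set (Fin d → ℝ)) (m ρ δ : ℝ)
    (a : (Fin d → ℝ) → (Fin d → ℝ) → (Fin d → ℝ) → ℂ) : Prop :=
  ContDiffOn ℝ (⊤ : ℕ∞)
    (fun q : ((Fin d → ℝ) × (Fin d → ℝ)) × (Fin d → ℝ) => a q.1.1 q.1.2 q.2)
    ((X ×ˢ X) ×ˢ Set.univ) ∧
  ∀ (α β β' : Fin d → ℕ) (K : Set (Fin d → ℝ)), IsCompact K → K ⊆ X →
    ∃ C : ℝ, ∀ x ∈ K, ∀ x' ∈ K, ∀ ξ : Fin d → ℝ,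
      ‖mpderiv β (fun y => mpderiv β' (fun y' => mpderiv α (fun η => a y y' η) ξ) x') x‖ ≤
        C * (1 + ‖ξ‖) ^ (m - ρ * (mOrder α : ℝ) + δ * ((mOrder β : ℝ) + (mOrder β' : ℝ)))

/-- `C₀^∞(X)` test functions. -/
def IsTestFun {d : ℕ} (X : Set (Fin d → ℝ)) (u : (Fin d → ℝ) → ℂ) : Prop :=
  ContDiff ℝ (⊤ : ℕ∞) u ∧ HasCompactSupport u ∧ tsupport u ⊆ X

/-- Fourier transform `(2π)^{-d/2} ∫ e^{-i⟨x,ξ⟩} u(x) dx`. -/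
def fourierHat {d : ℕ} (u : (Fin d → ℝ) → ℂ) (ξ : Fin d → ℝ) : ℂ :=
  (((2 * Real.pi) ^ (-(d : ℝ) / 2) : ℝ) : ℂ) *
    ∫ x : Fin d → ℝ, Complex.exp (-(Complex.I * (dotp x ξ : ℂ))) * u x

/-- Pseudo-differential operator with symbol `a`. -/
def Op {d : ℕ} (a : (Fin d → ℝ) → (Fin d → ℝ) → ℂ) (u : (Fin d → ℝ) → ℂ) :
    (Fin d → ℝ) → ℂ := fun x =>
  (((2 * Real.pi) ^ (-(d : ℝ) / 2) : ℝ) : ℂ) *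
    ∫ ξ : Fin d → ℝ, Complex.exp (Complex.I * (dotp x ξ : ℂ)) * a x ξ * fourierHat u ξ

/-- Pseudo-differential operator with amplitude `a` (iterated integral). -/
def OpAmp {d : ℕ} (a : (Fin d → ℝ) → (Fin d → ℝ) → (Fin d → ℝ) → ℂ)
    (u : (Fin d → ℝ) → ℂ) : (Fin d → ℝ) → ℂ := fun x =>
  (((2 * Real.pi) ^ (-(d : ℝ)) : ℝ) : ℂ) *
    ∫ ξ : Fin d → ℝ, ∫ x' : Fin d → ℝ,
      Complex.exp (Complex.I * (dotp (x - x') ξ : ℂ)) * a x x' ξ * u x'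

/-- The formal adjoint `A*` of the PDO with symbol `a`. -/
def OpAdj {d : ℕ} (a : (Fin d → ℝ) → (Fin d → ℝ) → ℂ) (u : (Fin d → ℝ) → ℂ) :
    (Fin d → ℝ) → ℂ := fun x =>
  (((2 * Real.pi) ^ (-(d : ℝ)) : ℝ) : ℂ) *
    ∫ ξ : Fin d → ℝ, ∫ x' : Fin d → ℝ,
      Complex.exp (Complex.I * (dotp (x - x') ξ : ℂ)) * (starRingEnd ℂ) (a x' ξ) * u x'

/-- Gradient of a real-valued function on `ℝ^d`. -/
def gradR {d : ℕ} (f : (Fin d → ℝ) → ℝ) (x : Fin d → ℝ) : Fin d → ℝ :=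
  fun i => fderiv ℝ f x (Pi.single i 1)

end

/-! Choose a vector `v` with `‖v‖ ≤ 1` and `⟨v, ζ⟩ = ‖ζ‖`; since `‖·‖` is the sup norm, a signed
coordinate vector will do. The derivative of the phase `θ = φ - ⟨·, ζ⟩` along `v` is
`‖ζ‖ (ρ - 1)`, where `ρ = ‖ζ‖⁻¹ ∂_v φ` and all its derivatives are `O(‖ξ‖ ^ (r - 1))`. One
integration by parts therefore gives

`‖ζ‖ ∫ e^{iθ} u = ∫ e^{iθ} (-i ∂_v u) + ‖ζ‖ ∫ e^{iθ} ρ u`,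

and each further one, applied to the last integral, gains another factor `ρ`. Once
`N (1 - r) ≥ 1`, the remaining factor `‖ζ‖ ρ ^ N` is bounded because `‖ζ‖ ≤ ‖ξ‖`.
-/

section DirectionalDerivatives

open scoped ContDiff

variable {E F : Type*} [NormedAddCommGroup E] [NormedSpace ℝ E]
  [NormedAddCommGroup F] [NormedSpace ℝ F] {f : E → F}

lemma contDiff_dirDeriv (hf : ContDiff ℝ ∞ f) (v : E) : ContDiff ℝ ∞ (dirDeriv v f) :=
  (hf.fderiv_right (by simp)).clm_apply contDiff_const

lemma contDiff_dirDerivList (hf : ContDiff ℝ ∞ f) : ∀ l : List E, ContDiff ℝ ∞ (dirDerivList l f)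
  | [] => hf
  | v :: l => contDiff_dirDeriv (contDiff_dirDerivList hf l) v

lemma dirDeriv_comm (hf : ContDiff ℝ 2 f) (v w : E) :
    dirDeriv v (dirDeriv w f) = dirDeriv w (dirDeriv v f) := by
  have hdiff : Differentiable ℝ (fderiv ℝ f) :=
    (hf.fderiv_right (m := 1) (by norm_num)).differentiable one_ne_zero
  have second_deriv (a b x : E) :
      dirDeriv a (dirDeriv b f) x = fderiv ℝ (fderiv ℝ f) x a b := by
    unfold dirDeriv
    simp [fderiv_clm_apply (hdiff x) (differentiableAt_const b)]
  funext x
  have symm : IsSymmSndFDerivAt ℝ f x := hf.contDiffAt.isSymmSndFDerivAt (by simp)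
  simpa only [second_deriv] using symm v w

lemma dirDerivList_eq_of_perm (hf : ContDiff ℝ ∞ f) {l l' : List E} (h : l.Perm l') :
    dirDerivList l f = dirDerivList l' f := by
  induction h with
  | nil => rfl
  | cons v _ ih => simp only [dirDerivList, ih]
  | swap v w l => exact dirDeriv_comm ((contDiff_dirDerivList hf l).of_le
      (WithTop.coe_le_coe.2 (le_top : (2 : ℕ∞) ≤ ⊤))) w v
  | trans _ _ ih ih' => exact ih.trans ih'

lemma dirDerivList_ofFn (hf : ContDiff ℝ ∞ f) {n : ℕ} (m : Fin n → E) (x : E) :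
    dirDerivList (List.ofFn m) f x = iteratedFDeriv ℝ n f x m := by
  induction n generalizing x with
  | zero => simp [dirDerivList]
  | succ n ih =>
    have hdiff : DifferentiableAt ℝ (iteratedFDeriv ℝ n f) x :=
      hf.differentiable_iteratedFDeriv (mod_cast ENat.natCast_lt_top n) x
    rw [List.ofFn_succ, dirDerivList, funext (ih fun k => m k.succ), iteratedFDeriv_succ_apply_left,
      dirDeriv, fderiv_continuousMultilinear_apply_const_apply hdiff]
    rfl

lemma norm_dirDerivList_le (hf : ContDiff ℝ ∞ f) {l : List E} (hl : ∀ v ∈ l, ‖v‖ ≤ 1) (x : E) :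
    ‖dirDerivList l f x‖ ≤ ‖iteratedFDeriv ℝ l.length f x‖ := by
  rw [← List.ofFn_get l, dirDerivList_ofFn hf, List.ofFn_get]
  refine (ContinuousMultilinearMap.le_opNorm _ _).trans
    (mul_le_of_le_one_right (norm_nonneg _) ?_)
  exact Finset.prod_le_one (fun _ _ => norm_nonneg _) fun k _ => hl _ (l.get_mem k)

lemma tsupport_dirDeriv_subset (v : E) (f : E → F) : tsupport (dirDeriv v f) ⊆ tsupport f :=
  tsupport_fderiv_apply_subset ℝ v

lemma tsupport_dirDerivList_subset (f : E → F) :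
    ∀ l : List E, tsupport (dirDerivList l f) ⊆ tsupport f
  | [] => subset_rfl
  | v :: l => (tsupport_dirDeriv_subset v _).trans (tsupport_dirDerivList_subset f l)

end DirectionalDerivatives

section MultiIndices

open scoped ContDiff

variable {F : Type*} [NormedAddCommGroup F] [NormedSpace ℝ F]

lemma perm_flatMap_replicate_count {n : ℕ} (l : List (Fin n)) :
    l.Perm ((List.finRange n).flatMap fun i => List.replicate (l.count i) i) := by
  rw [List.perm_iff_count]
  intro a
  have count_terms : (List.finRange n).map (List.count a ∘ fun i => List.replicate (l.count i) i) =
      List.ofFn fun i => if i = a then l.count i else 0 := by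
    simp [List.ofFn_eq_map, List.count_replicate, Function.comp_def]
  rw [List.count_flatMap, count_terms, List.sum_ofFn]
  simp

lemma mpderivB_count {n : ℕ} {E : Type*} [NormedAddCommGroup E] [NormedSpace ℝ E] {f : E → F}
    (hf : ContDiff ℝ ∞ f) (b : Fin n → E) (l : List (Fin n)) :
    mpderivB b (fun i => l.count i) f = dirDerivList (l.map b) f := by
  have hperm := (perm_flatMap_replicate_count l).map b
  simp only [List.map_flatMap, List.map_replicate] at hperm
  exact (dirDerivList_eq_of_perm hf hperm).symm

variable {d : ℕ} {f : (Fin d → ℝ) → F}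

lemma mpderiv_count_ofFn (hf : ContDiff ℝ ∞ f) {n : ℕ} (σ : Fin n → Fin d) (x : Fin d → ℝ) :
    mpderiv (fun i => (List.ofFn σ).count i) f x =
      iteratedFDeriv ℝ n f x fun k => Pi.single (σ k) 1 := by
  rw [mpderiv, mpderivB_count hf, List.map_ofFn, dirDerivList_ofFn hf]
  rfl

lemma norm_iteratedFDeriv_le_sum_mpderiv (hf : ContDiff ℝ ∞ f) (n : ℕ) (x : Fin d → ℝ) :
    ‖iteratedFDeriv ℝ n f x‖ ≤
      ∑ σ : Fin n → Fin d, ‖mpderiv (fun i => (List.ofFn σ).count i) f x‖ := by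
  refine ContinuousMultilinearMap.opNorm_le_bound (Finset.sum_nonneg fun _ _ => norm_nonneg _)
    fun m => ?_
  have expand : m = fun k => ∑ i, m k i • (Pi.single i 1 : Fin d → ℝ) :=
    funext fun k => pi_eq_sum_univ' (m k)
  conv_lhs => rw [expand, ContinuousMultilinearMap.map_sum]
  rw [Finset.sum_mul]
  refine norm_sum_le_of_le _ fun σ _ => ?_
  rw [ContinuousMultilinearMap.map_smul_univ, ← mpderiv_count_ofFn hf, norm_smul, norm_prod,
    mul_comm]
  gcongr with k
  exact norm_le_pi_norm (m k) (σ k)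

lemma norm_mpderiv_le_norm_iteratedFDeriv (hf : ContDiff ℝ ∞ f) (β : Fin d → ℕ) (x : Fin d → ℝ) :
    ‖mpderiv β f x‖ ≤ ‖iteratedFDeriv ℝ (mOrder β) f x‖ := by
  have hlen : ((List.finRange d).flatMap fun i =>
      List.replicate (β i) (Pi.single i 1 : Fin d → ℝ)).length = mOrder β := by
    simp [mOrder, List.length_flatMap, ← List.ofFn_eq_map, List.sum_ofFn]
  rw [← hlen]
  refine norm_dirDerivList_le hf (fun v hv => ?_) x
  obtain ⟨i, -, hi⟩ := List.mem_flatMap.1 hv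
  rw [List.eq_of_mem_replicate hi, Pi.norm_single, norm_one]

lemma tsupport_mpderiv_subset (β : Fin d → ℕ) (f : (Fin d → ℝ) → F) :
    tsupport (mpderiv β f) ⊆ tsupport f :=
  tsupport_dirDerivList_subset f _

end MultiIndices

section SmoothBigO

open Asymptotics
open scoped ContDiff

variable {ι E F : Type*} [NormedAddCommGroup E] [NormedSpace ℝ E]
  [NormedAddCommGroup F] [NormedSpace ℝ F]

/-- A family `f i` of smooth functions all of whose derivatives are `O(M i)` along the filter `l`
on pairs (parameter, point). With `l = 𝓟 (S ×ˢ K)` these are symbol estimates on `K`, uniform in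
the parameter `i ∈ S`. -/
structure IsSmoothBigO (l : Filter (ι × E)) (f : ι → E → F) (M : ι → ℝ) : Prop where
  contDiff : ∀ i, ContDiff ℝ ∞ (f i)
  isBigO : ∀ n : ℕ, (fun q : ι × E => iteratedFDeriv ℝ n (f q.1) q.2) =O[l] fun q => M q.1

namespace IsSmoothBigO

variable {l : Filter (ι × E)} {f g : ι → E → F} {M M' : ι → ℝ}

lemma trans_isBigO (hf : IsSmoothBigO l f M)
    (hM : (fun q : ι × E => M q.1) =O[l] fun q => M' q.1) : IsSmoothBigO l f M' :=
  ⟨hf.contDiff, fun n => (hf.isBigO n).trans hM⟩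

lemma add (hf : IsSmoothBigO l f M) (hg : IsSmoothBigO l g M) :
    IsSmoothBigO l (fun i y => f i y + g i y) M := by
  refine ⟨fun i => (hf.contDiff i).add (hg.contDiff i), fun n => ?_⟩
  refine ((hf.isBigO n).add (hg.isBigO n)).congr_left fun q => ?_
  exact (iteratedFDeriv_add_apply ((hf.contDiff q.1).of_le (mod_cast le_top)).contDiffAt
    ((hg.contDiff q.1).of_le (mod_cast le_top)).contDiffAt).symm

lemma const_smul {𝕜 : Type*} [NormedField 𝕜] [NormedSpace 𝕜 F] [SMulCommClass ℝ 𝕜 F] (c : ι → 𝕜)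
    (hf : IsSmoothBigO l f M) :
    IsSmoothBigO l (fun i y => c i • f i y) fun i => ‖c i‖ * M i := by
  refine ⟨fun i => (hf.contDiff i).const_smul (c i), fun n => ?_⟩
  have hbound (q : ι × E) : ‖iteratedFDeriv ℝ n (fun y => c q.1 • f q.1 y) q.2‖ ≤
      ‖c q.1‖ * ‖iteratedFDeriv ℝ n (f q.1) q.2‖ := by
    rw [iteratedFDeriv_const_smul_apply'
      ((hf.contDiff q.1).of_le (mod_cast le_top)).contDiffAt, norm_smul]
  exact (IsBigO.of_norm_le hbound).trans ((isBigO_refl _ l).mul (hf.isBigO n).norm_left)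

lemma smul {a : ι → E → ℝ} (ha : IsSmoothBigO l a M) (hf : IsSmoothBigO l f M') :
    IsSmoothBigO l (fun i y => a i y • f i y) fun i => M i * M' i := by
  refine ⟨fun i => (ha.contDiff i).smul (hf.contDiff i), fun n => ?_⟩
  have leibniz_term (k : ℕ) : (fun q : ι × E => (n.choose k : ℝ) *
      ‖iteratedFDeriv ℝ k (a q.1) q.2‖ * ‖iteratedFDeriv ℝ (n - k) (f q.1) q.2‖) =O[l]
        fun q => M q.1 * M' q.1 :=
    ((ha.isBigO k).norm_left.const_mul_left _).mul (hf.isBigO (n - k)).norm_left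
  have leibniz (q : ι × E) := norm_iteratedFDeriv_smul_le (n := n) (ha.contDiff q.1)
    (hf.contDiff q.1) q.2 (mod_cast le_top)
  have leibniz_sum := IsBigO.fun_sum fun k (_ : k ∈ Finset.range (n + 1)) => leibniz_term k
  exact (IsBigO.of_norm_le leibniz).trans leibniz_sum

lemma dirDeriv {v : ι → E} (hf : IsSmoothBigO l f M)
    (hv : (fun q : ι × E => v q.1) =O[l] fun _ => (1 : ℝ)) :
    IsSmoothBigO l (fun i => dirDeriv (v i) (f i)) M := by
  refine ⟨fun i => contDiff_dirDeriv (hf.contDiff i) (v i), fun n => ?_⟩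
  have hbound (q : ι × E) : ‖iteratedFDeriv ℝ n (_root_.dirDeriv (v q.1) (f q.1)) q.2‖ ≤
      ‖v q.1‖ * ‖iteratedFDeriv ℝ (n + 1) (f q.1) q.2‖ := by
    rw [← norm_iteratedFDeriv_fderiv]
    exact norm_iteratedFDeriv_clm_apply_const
      ((hf.contDiff q.1).fderiv_right (m := ∞) (by simp)).contDiffAt (mod_cast le_top)
  simpa using (IsBigO.of_norm_le hbound).trans (hv.norm_left.mul (hf.isBigO (n + 1)).norm_left)

end IsSmoothBigO

lemma isSmoothBigO_iff_mpderiv {d : ℕ} {l : Filter (ι × (Fin d → ℝ))}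
    {f : ι → (Fin d → ℝ) → F} {M : ι → ℝ} :
    IsSmoothBigO l f M ↔ (∀ i, ContDiff ℝ ∞ (f i)) ∧
      ∀ β, (fun q : ι × (Fin d → ℝ) => mpderiv β (f q.1) q.2) =O[l] fun q => M q.1 := by
  refine ⟨fun hf => ⟨hf.contDiff, fun β => ?_⟩, fun ⟨hsmooth, hβ⟩ => ⟨hsmooth, fun n => ?_⟩⟩
  · have hbound (q : ι × (Fin d → ℝ)) :=
      norm_mpderiv_le_norm_iteratedFDeriv (hf.contDiff q.1) β q.2
    exact (IsBigO.of_norm_le hbound).trans (hf.isBigO (mOrder β)).norm_left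
  · have hbound (q : ι × (Fin d → ℝ)) :=
      norm_iteratedFDeriv_le_sum_mpderiv (hsmooth q.1) n q.2
    have hsum := IsBigO.fun_sum fun (σ : Fin n → Fin d) (_ : σ ∈ Finset.univ) =>
      (hβ fun i => (List.ofFn σ).count i).norm_left
    exact (IsBigO.of_norm_le hbound).trans hsum

lemma isSmoothBigO_principal_iff {d : ℕ} {S : Set ι} {K : Set (Fin d → ℝ)}
    {f : ι → (Fin d → ℝ) → F} {M : ι → ℝ} (hM : ∀ i ∈ S, 0 ≤ M i) :
    IsSmoothBigO (𝓟 (S ×ˢ K)) f M ↔ (∀ i, ContDiff ℝ ∞ (f i)) ∧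
      ∀ β, ∃ C : ℝ, ∀ i ∈ S, ∀ y ∈ K, ‖mpderiv β (f i) y‖ ≤ C * M i := by
  simp only [isSmoothBigO_iff_mpderiv, isBigO_principal, Prod.forall, Set.mem_prod, and_imp]
  refine and_congr_right fun _ => forall_congr' fun β => exists_congr fun C => ?_
  refine forall_congr' fun i => ⟨fun h hi y hy => ?_, fun h y hi hy => ?_⟩
  · exact (h y hi hy).trans_eq (by rw [Real.norm_of_nonneg (hM i hi)])
  · exact (h hi y hy).trans_eq (by rw [Real.norm_of_nonneg (hM i hi)])

lemma IsSmoothBigO.exists_forall_norm_mpderiv_le {d : ℕ} {S : Set ι} {K : Set (Fin d → ℝ)}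
    {f : ι → (Fin d → ℝ) → F} {M : ι → ℝ} (hf : IsSmoothBigO (𝓟 (S ×ˢ K)) f M)
    (hM : ∀ i ∈ S, 0 ≤ M i) (hsupp : ∀ i, tsupport (f i) ⊆ K) (β : Fin d → ℕ) :
    ∃ C : ℝ, ∀ i ∈ S, ∀ y, ‖mpderiv β (f i) y‖ ≤ C * M i := by
  obtain ⟨C, hC⟩ := ((isSmoothBigO_principal_iff hM).1 hf).2 β
  refine ⟨|C|, fun i hi y => ?_⟩
  have hMi := hM i hi
  by_cases hy : y ∈ K
  · exact (hC i hi y hy).trans (by gcongr; exact le_abs_self C)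
  · have hoff : y ∉ tsupport (mpderiv β (f i)) := fun h =>
      hy (hsupp i (tsupport_mpderiv_subset β _ h))
    rw [image_eq_zero_of_notMem_tsupport hoff, norm_zero]
    positivity

end SmoothBigO

section IntegrationByParts

open Asymptotics
open scoped ContDiff

variable {E F : Type*} [NormedAddCommGroup E] [NormedSpace ℝ E]
  [NormedAddCommGroup F] [NormedSpace ℂ F]

lemma contDiff_cexp_I_mul {θ : E → ℝ} (hθ : ContDiff ℝ ∞ θ) :
    ContDiff ℝ ∞ fun y => Complex.exp (Complex.I * θ y) :=
  (contDiff_const.mul (Complex.ofRealCLM.contDiff.comp hθ)).cexp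

lemma dirDeriv_cexp_I_mul {θ : E → ℝ} (hθ : Differentiable ℝ θ) (v y : E) :
    dirDeriv v (fun y => Complex.exp (Complex.I * θ y)) y =
      Complex.I * (dirDeriv v θ y : ℝ) * Complex.exp (Complex.I * θ y) := by
  have hθ' : HasFDerivAt (fun y => (θ y : ℂ)) (Complex.ofRealCLM ∘L fderiv ℝ θ y) y :=
    Complex.ofRealCLM.hasFDerivAt.comp y (hθ y).hasFDerivAt
  simp only [dirDeriv, (hθ'.const_mul Complex.I).cexp.fderiv, smul_apply,
    ContinuousLinearMap.comp_apply, Complex.ofRealCLM_apply, smul_eq_mul]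
  ring

/-- The amplitude replacing `c u` after `N` integrations by parts of `c ∫ e^{iθ} u` in the
direction `v`, for a phase with `∂_v θ = c (ρ - 1)`. Its only undifferentiated term is
`c ρ ^ N u`. -/
noncomputable def absorbedAmplitude (c : ℝ) (v : E) (ρ : E → ℝ) : ℕ → (E → F) → E → F
  | 0, u => fun y => c • u y
  | N + 1, u => fun y =>
      -Complex.I • dirDeriv v u y + absorbedAmplitude c v ρ N (fun z => ρ z • u z) y

lemma contDiff_absorbedAmplitude (c : ℝ) (v : E) {ρ : E → ℝ} (hρ : ContDiff ℝ ∞ ρ) (N : ℕ)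
    {u : E → F} (hu : ContDiff ℝ ∞ u) : ContDiff ℝ ∞ (absorbedAmplitude c v ρ N u) := by
  induction N generalizing u with
  | zero => exact hu.const_smul c
  | succ N ih => exact ((contDiff_dirDeriv hu v).const_smul (-Complex.I)).add (ih (hρ.smul hu))

lemma tsupport_absorbedAmplitude_subset (c : ℝ) (v : E) (ρ : E → ℝ) (N : ℕ) (u : E → F) :
    tsupport (absorbedAmplitude c v ρ N u) ⊆ tsupport u := by
  induction N generalizing u with
  | zero => exact tsupport_smul_subset_right (fun _ => c) u
  | succ N ih =>
    refine (tsupport_add _ _).trans (Set.union_subset ?_ ?_)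
    · exact (tsupport_smul_subset_right (fun _ => -Complex.I) _).trans
        (tsupport_dirDeriv_subset v u)
    · exact (ih _).trans (tsupport_smul_subset_right ρ u)

lemma IsSmoothBigO.absorbedAmplitude {ι : Type*} {l : Filter (ι × E)} {c : ι → ℝ} {v : ι → E}
    {ρ : ι → E → ℝ} {R M P : ι → ℝ} {u : ι → E → F}
    (hv : (fun q : ι × E => v q.1) =O[l] fun _ => (1 : ℝ))
    (hρ : IsSmoothBigO l ρ R) (hR : (fun q : ι × E => R q.1) =O[l] fun _ => (1 : ℝ)) (N : ℕ)
    (hu : IsSmoothBigO l u M) (hM : (fun q : ι × E => M q.1) =O[l] fun q => P q.1)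
    (hcM : (fun q : ι × E => c q.1 * R q.1 ^ N * M q.1) =O[l] fun q => P q.1) :
    IsSmoothBigO l (fun i => absorbedAmplitude (c i) (v i) (ρ i) N (u i)) P := by
  induction N generalizing u M with
  | zero =>
    exact (hu.const_smul c).trans_isBigO ((isBigO_of_le _ fun q => by simp).trans hcM)
  | succ N ih =>
    have hderiv : IsSmoothBigO l (fun i y => -Complex.I • _root_.dirDeriv (v i) (u i) y) P := by
      refine ((hu.dirDeriv hv).const_smul fun _ => -Complex.I).trans_isBigO ?_
      simpa using hM
    refine hderiv.add (ih (hρ.smul hu) ?_ ?_)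
    · simpa using hR.mul hM
    · simpa only [pow_succ, mul_assoc] using hcM

variable [MeasurableSpace E] [BorelSpace E] {μ : Measure E}
  {θ ρ : E → ℝ} {u : E → F} {c : ℝ} {v : E}

lemma integrable_cexp_I_mul_smul [IsFiniteMeasureOnCompacts μ] (hθ : ContDiff ℝ ∞ θ)
    (hu : Continuous u) (hsupp : HasCompactSupport u) :
    Integrable (fun y => Complex.exp (Complex.I * θ y) • u y) μ :=
  ((contDiff_cexp_I_mul hθ).continuous.smul hu).integrable_of_hasCompactSupport hsupp.smul_left

variable [FiniteDimensional ℝ E] [μ.IsAddHaarMeasure]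

lemma integral_cexp_I_mul_smul_dirDeriv (hθ : ContDiff ℝ ∞ θ) (hu : ContDiff ℝ ∞ u)
    (hsupp : HasCompactSupport u) (v : E) :
    ∫ y, Complex.exp (Complex.I * θ y) • dirDeriv v u y ∂μ =
      -∫ y, Complex.exp (Complex.I * θ y) • (Complex.I * (dirDeriv v θ y : ℝ)) • u y ∂μ := by
  have deriv_exp (y : E) : fderiv ℝ (fun y => Complex.exp (Complex.I * θ y)) y v • u y =
      Complex.exp (Complex.I * θ y) • (Complex.I * (dirDeriv v θ y : ℝ)) • u y := by
    rw [← dirDeriv, dirDeriv_cexp_I_mul (hθ.differentiable (by simp)), smul_smul, mul_comm]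
  have hθv : Continuous fun y => Complex.I * ((dirDeriv v θ y : ℝ) : ℂ) := by
    have := (contDiff_dirDeriv hθ v).continuous
    fun_prop
  simp_rw [← deriv_exp]
  refine integral_smul_fderiv_eq_neg_fderiv_smul_of_integrable ?_ ?_ ?_
    (fun x _ => (contDiff_cexp_I_mul hθ).differentiable (by simp) x)
    (fun x _ => hu.differentiable (by simp) x)
  · simp_rw [deriv_exp]
    exact integrable_cexp_I_mul_smul hθ (hθv.smul hu.continuous) hsupp.smul_left
  · exact integrable_cexp_I_mul_smul hθ (contDiff_dirDeriv hu v).continuous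
      (hsupp.fderiv_apply ℝ v)
  · exact integrable_cexp_I_mul_smul hθ hu.continuous hsupp

lemma smul_integral_eq_integral_dirDeriv_add (hθ : ContDiff ℝ ∞ θ) (hu : ContDiff ℝ ∞ u)
    (hsupp : HasCompactSupport u) (hρ : ContDiff ℝ ∞ ρ)
    (hθρ : ∀ y, dirDeriv v θ y = c * (ρ y - 1)) :
    c • ∫ y, Complex.exp (Complex.I * θ y) • u y ∂μ =
      ∫ y, Complex.exp (Complex.I * θ y) • -Complex.I • dirDeriv v u y ∂μ +
        c • ∫ y, Complex.exp (Complex.I * θ y) • ρ y • u y ∂μ := by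
  have hint := integrable_cexp_I_mul_smul (μ := μ) hθ hu.continuous hsupp
  have hintρ : Integrable (fun y => Complex.exp (Complex.I * θ y) • ρ y • u y) μ :=
    integrable_cexp_I_mul_smul hθ (hρ.smul hu).continuous hsupp.smul_left
  have phase_deriv (y : E) : Complex.I • Complex.exp (Complex.I * θ y) •
      (Complex.I * (dirDeriv v θ y : ℝ)) • u y =
        c • (Complex.exp (Complex.I * θ y) • u y - Complex.exp (Complex.I * θ y) • ρ y • u y) := by
    rw [hθρ, smul_comm _ (ρ y), ← Complex.coe_smul c, ← Complex.coe_smul (ρ y)]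
    simp only [smul_smul, ← sub_smul]
    congr 1
    push_cast
    linear_combination c * (ρ y - 1) * Complex.exp (Complex.I * θ y) * Complex.I_sq
  have hby_parts : ∫ y, Complex.exp (Complex.I * θ y) • -Complex.I • dirDeriv v u y ∂μ =
      c • ∫ y, (Complex.exp (Complex.I * θ y) • u y -
        Complex.exp (Complex.I * θ y) • ρ y • u y) ∂μ := by
    simp_rw [smul_comm _ (-Complex.I)]
    rw [integral_smul, integral_cexp_I_mul_smul_dirDeriv hθ hu hsupp, neg_smul_neg,
      ← integral_smul, ← integral_smul]
    simp_rw [phase_deriv]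
  rw [hby_parts, integral_sub hint hintρ, smul_sub, sub_add_cancel]

lemma smul_integral_eq_integral_absorbedAmplitude (hθ : ContDiff ℝ ∞ θ) (hu : ContDiff ℝ ∞ u)
    (hsupp : HasCompactSupport u) (hρ : ContDiff ℝ ∞ ρ)
    (hθρ : ∀ y, dirDeriv v θ y = c * (ρ y - 1)) (N : ℕ) :
    c • ∫ y, Complex.exp (Complex.I * θ y) • u y ∂μ =
      ∫ y, Complex.exp (Complex.I * θ y) • absorbedAmplitude c v ρ N u y ∂μ := by
  induction N generalizing u with
  | zero => simp only [absorbedAmplitude, smul_comm _ c, integral_smul]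
  | succ N ih =>
    have hderiv : Integrable
        (fun y => Complex.exp (Complex.I * θ y) • -Complex.I • dirDeriv v u y) μ :=
      integrable_cexp_I_mul_smul hθ ((contDiff_dirDeriv hu v).continuous.const_smul (-Complex.I))
        (HasCompactSupport.smul_left (hsupp.fderiv_apply ℝ v))
    have hu' : ContDiff ℝ ∞ fun y => ρ y • u y := hρ.smul hu
    have hsupp' : HasCompactSupport fun y => ρ y • u y := hsupp.smul_left
    have hrest := integrable_cexp_I_mul_smul (μ := μ) hθ
      (contDiff_absorbedAmplitude c v hρ N hu').continuous
      (hsupp'.of_isClosed_subset (isClosed_tsupport _)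
        (tsupport_absorbedAmplitude_subset c v ρ N _))
    rw [smul_integral_eq_integral_dirDeriv_add hθ hu hsupp hρ hθρ, ih hu' hsupp',
      ← integral_add hderiv hrest]
    simp only [absorbedAmplitude, smul_add]

lemma exists_isSmoothBigO_smul_integral_eq_integral {ι : Type*} {l : Filter (ι × E)}
    {φ : ι → E → ℝ} {L : ι → E →L[ℝ] ℝ} {v : ι → E} {w : ι → E → F} {ε M : ι → ℝ} (N : ℕ)
    (hv : (fun q : ι × E => v q.1) =O[l] fun _ => (1 : ℝ))
    (hφ : IsSmoothBigO l φ fun i => ε i * L i (v i))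
    (hε : (fun q : ι × E => ε q.1) =O[l] fun _ => (1 : ℝ))
    (hN : (fun q : ι × E => L q.1 (v q.1) * ε q.1 ^ N) =O[l] fun _ => (1 : ℝ))
    (hw : IsSmoothBigO l w M) (hsupp : ∀ i, HasCompactSupport (w i)) :
    ∃ w' : ι → E → F, IsSmoothBigO l w' M ∧ (∀ i, tsupport (w' i) ⊆ tsupport (w i)) ∧
      ∀ i, L i (v i) ≠ 0 →
        L i (v i) • ∫ y, Complex.exp (Complex.I * (φ i y - L i y : ℝ)) • w i y ∂μ =
          ∫ y, Complex.exp (Complex.I * (φ i y - L i y : ℝ)) • w' i y ∂μ := by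
  let c i := L i (v i)
  let ρ i y := (c i)⁻¹ • dirDeriv (v i) (φ i) y
  have hρ : IsSmoothBigO l ρ ε := by
    refine ((hφ.dirDeriv hv).const_smul fun i => (c i)⁻¹).trans_isBigO (isBigO_of_le _ fun q => ?_)
    calc ‖‖(c q.1)⁻¹‖ * (ε q.1 * c q.1)‖ = ‖(c q.1)⁻¹ * c q.1‖ * ‖ε q.1‖ := by
          simp only [norm_mul, norm_norm]; ring
      _ ≤ 1 * ‖ε q.1‖ := by
          gcongr
          simpa using inv_mul_le_one
      _ = ‖ε q.1‖ := one_mul _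
  refine ⟨fun i => absorbedAmplitude (c i) (v i) (ρ i) N (w i),
    IsSmoothBigO.absorbedAmplitude hv hρ hε N hw (isBigO_refl _ l) ?_,
    fun i => tsupport_absorbedAmplitude_subset _ _ _ N _, fun i hi => ?_⟩
  · simpa using hN.mul (isBigO_refl (fun q : ι × E => M q.1) l)
  · refine smul_integral_eq_integral_absorbedAmplitude
      ((hφ.contDiff i).sub (L i).contDiff) (hw.contDiff i) (hsupp i) (hρ.contDiff i) (fun y => ?_) N
    have hdiff : DifferentiableAt ℝ (φ i) y := (hφ.contDiff i).differentiable (by simp) y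
    simp only [dirDeriv, fderiv_fun_sub hdiff (L i).differentiableAt,
      ContinuousLinearMap.fderiv, sub_apply, ρ, c, smul_eq_mul]
    field_simp

end IntegrationByParts

section LinearPhase

variable {d : ℕ}

/-- The pairing `dotp · ζ` as a continuous linear functional. -/
noncomputable def dotpCLM (ζ : Fin d → ℝ) : (Fin d → ℝ) →L[ℝ] ℝ :=
  ∑ i, ζ i • ContinuousLinearMap.proj i

lemma dotpCLM_apply (ζ y : Fin d → ℝ) : dotpCLM ζ y = dotp y ζ := by
  simp [dotpCLM, dotp, mul_comm]

lemma exists_norm_le_one_dotp_eq_norm (ζ : Fin d → ℝ) : ∃ v, ‖v‖ ≤ 1 ∧ dotp v ζ = ‖ζ‖ := by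
  rcases isEmpty_or_nonempty (Fin d) with hd | hd
  · exact ⟨0, by simp, by simp [dotp, Subsingleton.elim ζ 0]⟩
  obtain ⟨j, hj⟩ := Finite.exists_max fun i => ‖ζ i‖
  have hnorm : ‖ζ‖ = ‖ζ j‖ :=
    le_antisymm ((pi_norm_le_iff_of_nonneg (norm_nonneg _)).2 hj) (norm_le_pi_norm ζ j)
  refine ⟨Pi.single j (SignType.sign (ζ j) : ℝ), ?_, ?_⟩
  · rw [Pi.norm_single]
    rcases lt_trichotomy (ζ j) 0 with h | h | h <;> simp [h]
  · simp [dotp, Pi.single_apply, hnorm, sign_mul_self]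

lemma mul_rpow_sub_one_pow_le_one {r x z : ℝ} {N : ℕ} (hN : 1 ≤ N * (1 - r)) (hx : 1 ≤ x)
    (hz : z ≤ x) : z * (x ^ (r - 1)) ^ N ≤ 1 := by
  have hx0 : 0 < x := one_pos.trans_le hx
  calc z * (x ^ (r - 1)) ^ N ≤ x * x ^ ((r - 1) * N) := by
        rw [Real.rpow_mul_natCast hx0.le]
        gcongr
    _ ≤ x * x ^ (-1 : ℝ) := by
        gcongr
        linarith
    _ = 1 := by rw [Real.rpow_neg_one, mul_inv_cancel₀ hx0.ne']

end LinearPhase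

section Absorption

open Asymptotics
open scoped ContDiff

lemma exists_isSmoothBigO_norm_mul_integral_eq_integral {ι : Type*} {d : ℕ}
    {l : Filter (ι × (Fin d → ℝ))} {r : ℝ} (hr : r < 1) {X : ι → ℝ} {ζ : ι → Fin d → ℝ}
    (hX : ∀ᶠ q in l, 1 ≤ X q.1) (hζ : ∀ᶠ q in l, ‖ζ q.1‖ ≤ X q.1)
    {φ : ι → (Fin d → ℝ) → ℝ} (hφ : IsSmoothBigO l φ fun i => X i ^ (r - 1) * ‖ζ i‖)
    {w : ι → (Fin d → ℝ) → ℂ} {M : ι → ℝ} (hw : IsSmoothBigO l w M)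
    (hsupp : ∀ i, HasCompactSupport (w i)) :
    ∃ w' : ι → (Fin d → ℝ) → ℂ, IsSmoothBigO l w' M ∧
      (∀ i, tsupport (w' i) ⊆ tsupport (w i)) ∧
      ∀ i, ζ i ≠ 0 →
        (‖ζ i‖ : ℂ) * ∫ y, w i y * Complex.exp (Complex.I * φ i y) *
            Complex.exp (-(Complex.I * dotp y (ζ i))) =
          ∫ y, w' i y * Complex.exp (Complex.I * φ i y) *
            Complex.exp (-(Complex.I * dotp y (ζ i))) := by
  choose v hv hvζ using fun i => exists_norm_le_one_dotp_eq_norm (ζ i)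
  obtain ⟨N, hN⟩ : ∃ N : ℕ, 1 ≤ N * (1 - r) := by
    simpa using Archimedean.arch 1 (sub_pos.2 hr)
  have hv' : (fun q : ι × (Fin d → ℝ) => v q.1) =O[l] fun _ => (1 : ℝ) :=
    isBigO_of_le l fun q => by simpa using hv q.1
  have decay : (fun q : ι × (Fin d → ℝ) => X q.1 ^ (r - 1)) =O[l] fun _ => (1 : ℝ) := by
    refine .of_norm_eventuallyLE ?_
    filter_upwards [hX] with q hq
    rw [Real.norm_of_nonneg (by positivity)]
    exact Real.rpow_le_one_of_one_le_of_nonpos hq (by linarith)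
  have absorbed : (fun q : ι × (Fin d → ℝ) => ‖ζ q.1‖ * (X q.1 ^ (r - 1)) ^ N) =O[l]
      fun _ => (1 : ℝ) := by
    refine .of_norm_eventuallyLE ?_
    filter_upwards [hX, hζ] with q hq hζq
    rw [Real.norm_of_nonneg (by positivity)]
    exact mul_rpow_sub_one_pow_le_one hN hq hζq
  have hLv (i : ι) : dotpCLM (ζ i) (v i) = ‖ζ i‖ := (dotpCLM_apply _ _).trans (hvζ i)
  simp only [← hLv] at hφ absorbed
  obtain ⟨w', hw', hsub, hint⟩ := exists_isSmoothBigO_smul_integral_eq_integral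
    (μ := volume) N hv' hφ decay absorbed hw hsupp
  refine ⟨w', hw', hsub, fun i hi => ?_⟩
  have hexp (u : (Fin d → ℝ) → ℂ) (y : Fin d → ℝ) : u y * Complex.exp (Complex.I * φ i y) *
      Complex.exp (-(Complex.I * dotp y (ζ i))) =
        Complex.exp (Complex.I * (φ i y - dotpCLM (ζ i) y : ℝ)) • u y := by
    rw [mul_assoc, ← Complex.exp_add, mul_comm, smul_eq_mul, dotpCLM_apply]
    push_cast
    ring_nf
  simpa only [hexp, hLv, Complex.real_smul] using hint i (by simpa only [hLv, norm_ne_zero_iff])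

theorem statement8_general {d : ℕ} {τ : Type*} {r p : ℝ} (hr : r < 1)
    {K : Set (Fin d → ℝ)} (hK : IsCompact K) {T : Set τ}
    {φ : (Fin d → ℝ) → (Fin d → ℝ) → (Fin d → ℝ) → τ → ℝ}
    {w : (Fin d → ℝ) → (Fin d → ℝ) → (Fin d → ℝ) → τ → ℂ}
    (hφs : ∀ ξ ζ t, ContDiff ℝ ∞ fun y => φ y ξ ζ t)
    (hφ : ∀ β : Fin d → ℕ, ∃ C : ℝ, ∀ ξ ζ, ∀ t ∈ T, 1 ≤ ‖ζ‖ → ‖ζ‖ ≤ ‖ξ‖ / 2 → ∀ y ∈ K,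
      ‖mpderiv β (fun y' => φ y' ξ ζ t) y‖ ≤ C * ‖ξ‖ ^ (r - 1) * ‖ζ‖)
    (hws : ∀ ξ ζ t, ContDiff ℝ ∞ fun y => w y ξ ζ t)
    (hwsupp : ∀ y ∉ K, ∀ ξ ζ t, w y ξ ζ t = 0)
    (hw : ∀ β : Fin d → ℕ, ∃ C : ℝ, ∀ ξ ζ, ∀ t ∈ T, 1 ≤ ‖ζ‖ → ‖ζ‖ ≤ ‖ξ‖ / 2 → ∀ y ∈ K,
      ‖mpderiv β (fun y' => w y' ξ ζ t) y‖ ≤ C * ‖ξ‖ ^ p) :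
    ∃ wt : (Fin d → ℝ) → (Fin d → ℝ) → (Fin d → ℝ) → τ → ℂ,
      (∀ ξ ζ t, ContDiff ℝ ∞ fun y => wt y ξ ζ t) ∧
      (∀ y ∉ K, ∀ ξ ζ t, wt y ξ ζ t = 0) ∧
      (∀ β : Fin d → ℕ, ∃ C : ℝ, ∀ ξ ζ, ∀ t ∈ T, 1 ≤ ‖ζ‖ → ‖ζ‖ ≤ ‖ξ‖ / 2 → ∀ y,
        ‖mpderiv β (fun y' => wt y' ξ ζ t) y‖ ≤ C * ‖ξ‖ ^ p) ∧
      (∀ ξ ζ, ∀ t ∈ T, 1 ≤ ‖ζ‖ → ‖ζ‖ ≤ ‖ξ‖ / 2 →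
        (‖ζ‖ : ℂ) * ∫ y, w y ξ ζ t * Complex.exp (Complex.I * φ y ξ ζ t) *
            Complex.exp (-(Complex.I * dotp y ζ)) =
          ∫ y, wt y ξ ζ t * Complex.exp (Complex.I * φ y ξ ζ t) *
            Complex.exp (-(Complex.I * dotp y ζ))) := by
  let S : Set ((Fin d → ℝ) × (Fin d → ℝ) × τ) :=
    {i | i.2.2 ∈ T ∧ 1 ≤ ‖i.2.1‖ ∧ ‖i.2.1‖ ≤ ‖i.1‖ / 2}
  have hφO : IsSmoothBigO (𝓟 (S ×ˢ K)) (fun i y => φ y i.1 i.2.1 i.2.2)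
      fun i => ‖i.1‖ ^ (r - 1) * ‖i.2.1‖ := by
    refine (isSmoothBigO_principal_iff fun i _ => by positivity).2
      ⟨fun i => hφs .., fun β => (hφ β).imp fun C hC i ⟨ht, h1, h2⟩ y hy => ?_⟩
    rw [← mul_assoc]
    exact hC _ _ _ ht h1 h2 y hy
  have hM : ∀ i ∈ S, 0 ≤ ‖i.1‖ ^ p := fun i _ => by positivity
  have hwO : IsSmoothBigO (𝓟 (S ×ˢ K)) (fun i y => w y i.1 i.2.1 i.2.2) fun i => ‖i.1‖ ^ p :=
    (isSmoothBigO_principal_iff hM).2 ⟨fun i => hws .., fun β => (hw β).imp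
      fun C hC i ⟨ht, h1, h2⟩ => hC _ _ _ ht h1 h2⟩
  have hwK (i : (Fin d → ℝ) × (Fin d → ℝ) × τ) : tsupport (fun y => w y i.1 i.2.1 i.2.2) ⊆ K :=
    closure_minimal (Function.support_subset_iff'.2 fun y hy => hwsupp y hy ..) hK.isClosed
  obtain ⟨w', hw', hsub, hint⟩ := exists_isSmoothBigO_norm_mul_integral_eq_integral hr
    (eventually_principal.2 fun q hq => by linarith [hq.1.2.1, hq.1.2.2])
    (eventually_principal.2 fun q hq => by linarith [hq.1.2.1, hq.1.2.2]) hφO hwO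
    fun i => hK.of_isClosed_subset (isClosed_tsupport _) (hwK i)
  have hsubK i := (hsub i).trans (hwK i)
  refine ⟨fun y ξ ζ t => w' (ξ, ζ, t) y, fun ξ ζ t => hw'.contDiff _,
    fun y hy ξ ζ t => image_eq_zero_of_notMem_tsupport fun h => hy (hsubK _ h), fun β => ?_,
    fun ξ ζ t _ h1 _ => hint (ξ, ζ, t) (norm_pos_iff.1 (one_pos.trans_le h1))⟩
  exact (hw'.exists_forall_norm_mpderiv_le hM hsubK β).imp
    fun C hC ξ ζ t ht h1 h2 => hC (ξ, ζ, t) ⟨ht, h1, h2⟩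

end Absorption

/-- Lemma 2.9 / `BC2A`: if the phase `φ` satisfies
`|∂_y^β φ| ≤ C_β |ξ|^{r-1}|ζ|` and the amplitude `w` is supported in `K` with
`|∂_y^β w| ≤ C_β |ξ|^p`, then the growing factor `|ζ|` can be absorbed:
`|ζ| ∫ w e^{iφ} e^{-i⟨y,ζ⟩} dy = ∫ w̃ e^{iφ} e^{-i⟨y,ζ⟩} dy` with `w̃` of the same type,
uniformly over `1 ≤ |ζ| ≤ |ξ|/2` and the parameter set `T`. -/
theorem statement8 {d : ℕ} (r p : ℝ) (hr : r ∈ Set.Ico (0 : ℝ) 1)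
    (K : Set (Fin d → ℝ)) (hK : IsCompact K) (T : Set ℝ)
    (φ : (Fin d → ℝ) → (Fin d → ℝ) → (Fin d → ℝ) → ℝ → ℝ)
    (w : (Fin d → ℝ) → (Fin d → ℝ) → (Fin d → ℝ) → ℝ → ℂ)
    (hφs : ∀ (ξ ζ : Fin d → ℝ) (t : ℝ), ContDiff ℝ (⊤ : ℕ∞) fun y => φ y ξ ζ t)
    (hφ : ∀ β : Fin d → ℕ, ∃ C : ℝ, ∀ ξ ζ : Fin d → ℝ, ∀ t ∈ T,
      1 ≤ ‖ζ‖ → ‖ζ‖ ≤ ‖ξ‖ / 2 → ∀ y ∈ K,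
        ‖mpderiv β (fun y' => φ y' ξ ζ t) y‖ ≤ C * ‖ξ‖ ^ (r - 1) * ‖ζ‖)
    (hws : ∀ (ξ ζ : Fin d → ℝ) (t : ℝ), ContDiff ℝ (⊤ : ℕ∞) fun y => w y ξ ζ t)
    (hwsupp : ∀ y ∉ K, ∀ ξ ζ : Fin d → ℝ, ∀ t : ℝ, w y ξ ζ t = 0)
    (hw : ∀ β : Fin d → ℕ, ∃ C : ℝ, ∀ ξ ζ : Fin d → ℝ, ∀ t ∈ T,
      ‖ζ‖ ≤ ‖ξ‖ / 2 → ∀ y : Fin d → ℝ,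
        ‖mpderiv β (fun y' => w y' ξ ζ t) y‖ ≤ C * ‖ξ‖ ^ p) :
    ∃ wt : (Fin d → ℝ) → (Fin d → ℝ) → (Fin d → ℝ) → ℝ → ℂ,
      (∀ (ξ ζ : Fin d → ℝ) (t : ℝ), ContDiff ℝ (⊤ : ℕ∞) fun y => wt y ξ ζ t) ∧
      (∀ y ∉ K, ∀ ξ ζ : Fin d → ℝ, ∀ t : ℝ, wt y ξ ζ t = 0) ∧
      (∀ β : Fin d → ℕ, ∃ C : ℝ, ∀ ξ ζ : Fin d → ℝ, ∀ t ∈ T,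
        1 ≤ ‖ζ‖ → ‖ζ‖ ≤ ‖ξ‖ / 2 → ∀ y : Fin d → ℝ,
          ‖mpderiv β (fun y' => wt y' ξ ζ t) y‖ ≤ C * ‖ξ‖ ^ p) ∧
      (∀ ξ ζ : Fin d → ℝ, ∀ t ∈ T, 1 ≤ ‖ζ‖ → ‖ζ‖ ≤ ‖ξ‖ / 2 →
        (‖ζ‖ : ℂ) * ∫ y : Fin d → ℝ,
            w y ξ ζ t * Complex.exp (Complex.I * (φ y ξ ζ t : ℂ)) *
              Complex.exp (-(Complex.I * (dotp y ζ : ℂ)))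
          = ∫ y : Fin d → ℝ,
              wt y ξ ζ t * Complex.exp (Complex.I * (φ y ξ ζ t : ℂ)) *
                Complex.exp (-(Complex.I * (dotp y ζ : ℂ)))) := by
  exact statement8_general hr.2 hK hφs hφ hws hwsupp fun β =>
    (hw β).imp fun C hC ξ ζ t ht _ h y _ => hC ξ ζ t ht h y
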